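/- arXiv:2501.14931 — 3 statements merged into one kernel-verified Lean document; each statement's English description precedes it below -/
import Mathlib

section
/- Let R be a finite set with |R| = n = α + β + γ for natural numbers α, β, γ, and let R₁, R₂ ⊆ R with |R₁| ≥ n − ⌊α/2⌋ + β and |R₂| ≥ ⌊α/2⌋ + 1. Then |R₁ ∩ R₂| ≥ β + 1, and consequently for every B ⊆ R with |B| ≤ β there exists r ∈ R₁ ∩ R₂ with r ∉ B. -/
theorem lt_card_inter_of_card_add_lt_card_add_card {ι : Type*} [DecidableEq ι]
    {s t u : Finset ι} {k : ℕ} (ht : t ⊆ s) (hu : u ⊆ s) (h : s.card + k < t.card + u.card) :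
    k < (t ∩ u).card := by
  have hunion : (t ∪ u).card ≤ s.card := Finset.card_le_card (Finset.union_subset ht hu)
  have hcount : (t ∪ u).card + (t ∩ u).card = t.card + u.card :=
    Finset.card_union_add_card_inter t u
  lia

theorem quorum_intersection_general {ι : Type*} [DecidableEq ι] {R R₁ R₂ : Finset ι} {β : ℕ}
    (h₁ : R₁ ⊆ R) (h₂ : R₂ ⊆ R) (hcard : R.card + β < R₁.card + R₂.card) :
    β < (R₁ ∩ R₂).card ∧ ∀ B : Finset ι, B.card ≤ β → ∃ r ∈ R₁ ∩ R₂, r ∉ B :=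
  have hinter : β < (R₁ ∩ R₂).card := lt_card_inter_of_card_add_lt_card_add_card h₁ h₂ hcard
  ⟨hinter, fun _ hB ↦ Finset.exists_mem_notMem_of_card_lt_card (hB.trans_lt hinter)⟩

/-- Quorum intersection for past-perfection safety of pod-core: with `|R| = n = α + β + γ`,
any `R₁ ⊆ R` of size at least `n − ⌊α/2⌋ + β` and `R₂ ⊆ R` of size at least `⌊α/2⌋ + 1`
intersect in at least `β + 1` replicas; hence for any `B ⊆ R` with `|B| ≤ β` there is a
replica in `R₁ ∩ R₂` outside `B`. -/
theorem quorum_intersection {ι : Type*} [DecidableEq ι]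
    (R R₁ R₂ : Finset ι) (n α β γ : ℕ)
    (hn : R.card = n) (hsum : n = α + β + γ)
    (h₁ : R₁ ⊆ R) (h₂ : R₂ ⊆ R)
    (hc₁ : R₁.card ≥ n - α / 2 + β) (hc₂ : R₂.card ≥ α / 2 + 1) :
    (R₁ ∩ R₂).card ≥ β + 1 ∧
    ∀ B ⊆ R, B.card ≤ β → ∃ r ∈ R₁ ∩ R₂, r ∉ B := by
  -- `n ≤ (n - α / 2) + α / 2` holds even for truncated subtraction.
  have hcard : R.card + β < R₁.card + R₂.card := by lia
  exact (quorum_intersection_general h₁ h₂ hcard).imp_right fun hB B _ ↦ hB B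
end

section
/- Let R be a finite set with |R| = n = α + β + γ for natural numbers α, β, γ with α ≥ 4β + 2γ + 1, let H ⊆ R with |R \ H| ≤ β + γ, let f : R → ℕ, and let t be a natural number such that the number of r ∈ R with f(r) ≤ t is at least ⌊α/2⌋ − β + 1. Then there exists r ∈ H with f(r) ≤ t. -/
theorem exists_mem_inter_of_card_sdiff_lt_card_filter {ι : Type*} [DecidableEq ι]
    {s t : Finset ι} {p : ι → Prop} [DecidablePred p]
    (hcard : (s \ t).card < (s.filter p).card) : ∃ a ∈ s ∩ t, p a := by
  obtain ⟨a, ha, ha_sdiff⟩ := Finset.exists_mem_notMem_of_card_lt_card hcard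
  obtain ⟨has, hpa⟩ := Finset.mem_filter.mp ha
  have hat : a ∈ t := by_contra fun hat => ha_sdiff (Finset.mem_sdiff.mpr ⟨has, hat⟩)
  exact ⟨a, Finset.mem_inter.mpr ⟨has, hat⟩, hpa⟩

theorem add_lt_div_two_sub_add_one {α β γ : ℕ} (hα : 4 * β + 2 * γ ≤ α) :
    β + γ < α / 2 - β + 1 := by
  have hhalf : β + γ + β ≤ α / 2 := by omega
  exact Nat.lt_succ_of_le (Nat.le_sub_of_add_le hhalf)

theorem rperf_bounded_by_honest_general {ι T : Type*} [DecidableEq ι] [LE T] [DecidableLE T]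
    (R H : Finset ι) (α β γ : ℕ) (hα : 4 * β + 2 * γ ≤ α)
    (hfault : (R \ H).card ≤ β + γ) (f : ι → T) (t : T)
    (hcount : α / 2 - β + 1 ≤ (R.filter (fun r => f r ≤ t)).card) :
    ∃ r ∈ R ∩ H, f r ≤ t := by
  apply exists_mem_inter_of_card_sdiff_lt_card_filter
  calc
    (R \ H).card ≤ β + γ := hfault
    _ < α / 2 - β + 1 := add_lt_div_two_sub_add_one hα
    _ ≤ (R.filter (fun r => f r ≤ t)).card := hcount

/-- "rperf bounded by honest timestamp" (Lemma 2 for pod-core): with `|R| = n = α + β + γ`,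
`α ≥ 4β + 2γ + 1`, at most `β + γ` replicas outside the honest set `H`, and at least
`⌊α/2⌋ − β + 1` replicas `r ∈ R` with `f r ≤ t`, some honest replica `r ∈ H` has
`f r ≤ t`. -/
theorem rperf_bounded_by_honest {ι : Type*} [DecidableEq ι]
    (R H : Finset ι) (n α β γ : ℕ)
    (hn : R.card = n) (hsum : n = α + β + γ) (hα : α ≥ 4 * β + 2 * γ + 1)
    (hH : H ⊆ R) (hfault : (R \ H).card ≤ β + γ)
    (f : ι → ℕ) (t : ℕ)
    (hcount : (R.filter (fun r => f r ≤ t)).card ≥ α / 2 - β + 1) :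
    ∃ r ∈ H, f r ≤ t := by
  obtain ⟨r, hr, hrt⟩ :=
    rperf_bounded_by_honest_general R H α β γ (Nat.le_of_succ_le hα) hfault f t hcount
  exact ⟨r, Finset.mem_of_mem_inter_right hr, hrt⟩
end

section
/- Let R be a finite set with |R| = n = α + β + γ for natural numbers α, β, γ, let H ⊆ R with |R \ H| ≤ β, and let S, B ⊆ R with |S| ≥ ⌊α/2⌋ + 1 and |B| ≥ n − ⌊α/2⌋ + β. Then there exists r ∈ S ∩ B ∩ H. -/
section Counting

open Finset

variable {ι : Type*} [DecidableEq ι] {R H S B T : Finset ι}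

theorem card_add_card_le_card_add_card_inter (hS : S ⊆ R) (hB : B ⊆ R) :
    #S + #B ≤ #R + #(S ∩ B) :=
  calc
    #S + #B = #(S ∪ B) + #(S ∩ B) := (card_union_add_card_inter S B).symm
    _ ≤ #R + #(S ∩ B) := by gcongr; exact union_subset hS hB

theorem inter_nonempty_of_card_sdiff_lt_card (hT : T ⊆ R) (hcard : #(R \ H) < #T) :
    (T ∩ H).Nonempty := by
  obtain ⟨r, hrT, hr⟩ := exists_mem_notMem_of_card_lt_card hcard
  have hrH : r ∈ H := by
    by_contra hrH
    exact hr (mem_sdiff.mpr ⟨hT hrT, hrH⟩)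
  exact ⟨r, mem_inter.mpr ⟨hrT, hrH⟩⟩

theorem bidset_no_framing_general (hS : S ⊆ R) (hB : B ⊆ R)
    (hcard : #R + #(R \ H) < #S + #B) : (S ∩ B ∩ H).Nonempty := by
  have hoverlap : #(R \ H) < #(S ∩ B) :=
    lt_of_add_lt_add_left (hcard.trans_le (card_add_card_le_card_add_card_inter hS hB))
  exact inter_nonempty_of_card_sdiff_lt_card (inter_subset_left.trans hS) hoverlap

end Counting

/-- No-framing counting lemma of bidset-core accountability: with `|R| = n = α + β + γ`,
at most `β` replicas outside the honest set `H`, `|S| ≥ ⌊α/2⌋ + 1` and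
`|B| ≥ n − ⌊α/2⌋ + β`, some honest replica lies in `S ∩ B ∩ H`. -/
theorem bidset_no_framing {ι : Type*} [DecidableEq ι]
    (R H S B : Finset ι) (n α β γ : ℕ)
    (hn : R.card = n) (hsum : n = α + β + γ)
    (hH : H ⊆ R) (hfault : (R \ H).card ≤ β)
    (hS : S ⊆ R) (hB : B ⊆ R)
    (hcS : S.card ≥ α / 2 + 1) (hcB : B.card ≥ n - α / 2 + β) :
    ∃ r, r ∈ S ∩ B ∩ H := by
  -- `n ≤ (n - α / 2) + α / 2` holds even where the subtraction truncates.
  have hcard : R.card + (R \ H).card < S.card + B.card := by omega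
  exact bidset_no_framing_general hS hB hcard
end
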